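/- Let n ≥ k > r ≥ 1, D ∈ ℝ^{n×k}, and X, X̃ ∈ 𝕆^{n×k} be such that XᵀD ⪰ 0, X̃ᵀD ⪰ 0, and rank(XᵀD) = rank(X̃ᵀD) = r. Let XᵀD = VΣVᵀ and X̃ᵀD = ṼΣ̃Ṽᵀ be spectral (= singular value) decompositions with V, Ṽ ∈ 𝕆^{k×k} orthogonal, Σ = diag(σ_1, …, σ_r, 0, …, 0) and Σ̃ = diag(σ̃_1, …, σ̃_r, 0, …, 0) where σ_1 ≥ … ≥ σ_r > 0 and σ̃_1 ≥ … ≥ σ̃_r > 0; write V₁ = V_{(:,1:r)}, V₂ = V_{(:,r+1:k)}. Then there exists W ∈ 𝕆^{(k−r)×(k−r)} such that ‖X̃ − (XV₁V₁ᵀ + XV₂WV₂ᵀ)‖_F ≤ ( √2 + 2√2·‖D‖₂/(σ_r + σ̃_r) + 4‖D‖₂/max{σ_r, σ̃_r} ) · √(k − ‖XᵀX̃‖_F²), where √(k − ‖XᵀX̃‖_F²) = ‖sin Θ(R(X), R(X̃))‖_F. -/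

import Mathlib

open Matrix

noncomputable def frobNorm {m n : ℕ} (A : Matrix (Fin m) (Fin n) ℝ) : ℝ :=
  Real.sqrt ((Aᵀ * A).trace)

noncomputable def specNorm {m n : ℕ} (A : Matrix (Fin m) (Fin n) ℝ) : ℝ :=
  ‖(Matrix.toEuclideanLin A).toContinuousLinearMap‖

def headCols {m : ℕ} (r : ℕ) (h : r ≤ m) (A : Matrix (Fin m) (Fin m) ℝ) :
    Matrix (Fin m) (Fin r) ℝ :=
  A.submatrix id (Fin.castLE h)

def tailCols {m : ℕ} (r : ℕ) (h : r ≤ m) (A : Matrix (Fin m) (Fin m) ℝ) :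
    Matrix (Fin m) (Fin (m - r)) ℝ :=
  A.submatrix id fun j => Fin.cast (Nat.add_sub_cancel' h) (Fin.natAdd r j)

theorem frob_nonneg {m n : ℕ} (A : Matrix (Fin m) (Fin n) ℝ) : 0 ≤ frobNorm A := Real.sqrt_nonneg _

theorem tr_eq {m n : ℕ} (A : Matrix (Fin m) (Fin n) ℝ) :
    (Aᵀ * A).trace = ∑ i, ∑ j, A i j ^ 2 := by
  rw [Finset.sum_comm]
  simp [Matrix.trace, Matrix.mul_apply, sq]

theorem frob_sq_tr {m n : ℕ} (A : Matrix (Fin m) (Fin n) ℝ) :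
    frobNorm A ^ 2 = (Aᵀ * A).trace := by
  rw [frobNorm, Real.sq_sqrt]
  rw [tr_eq]; positivity

theorem frob_sq {m n : ℕ} (A : Matrix (Fin m) (Fin n) ℝ) :
    frobNorm A ^ 2 = ∑ i, ∑ j, A i j ^ 2 := by rw [frob_sq_tr, tr_eq]

section
attribute [local instance] Matrix.frobeniusNormedAddCommGroup

theorem frob_eq {m n : ℕ} (A : Matrix (Fin m) (Fin n) ℝ) : frobNorm A = ‖A‖ := by
  rw [frobNorm, tr_eq, Matrix.frobenius_norm_def, Real.sqrt_eq_rpow]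
  simp

theorem frob_add {m n : ℕ} (A B : Matrix (Fin m) (Fin n) ℝ) :
    frobNorm (A + B) ≤ frobNorm A + frobNorm B := by
  simp only [frob_eq]; exact norm_add_le _ _
end

theorem frob_transpose {m n : ℕ} (A : Matrix (Fin m) (Fin n) ℝ) : frobNorm Aᵀ = frobNorm A := by
  rw [frobNorm, frobNorm, Matrix.trace_mul_comm]; simp

theorem frob_isoL {m n p : ℕ} (X : Matrix (Fin m) (Fin n) ℝ) (hX : Xᵀ * X = 1)
    (A : Matrix (Fin n) (Fin p) ℝ) : frobNorm (X * A) = frobNorm A := by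
  rw [frobNorm, frobNorm, Matrix.transpose_mul, Matrix.mul_assoc, ← Matrix.mul_assoc Xᵀ, hX,
    Matrix.one_mul]

theorem frob_isoR {m n p : ℕ} (Z : Matrix (Fin m) (Fin n) ℝ) (hZ : Zᵀ * Z = 1)
    (A : Matrix (Fin p) (Fin n) ℝ) : frobNorm (A * Zᵀ) = frobNorm A := by
  rw [← frob_transpose, Matrix.transpose_mul, Matrix.transpose_transpose, frob_isoL Z hZ,
    frob_transpose]

theorem frob_neg {m n : ℕ} (A : Matrix (Fin m) (Fin n) ℝ) : frobNorm (-A) = frobNorm A := by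
  simp [frobNorm]

section
open scoped Matrix.Norms.L2Operator
theorem frob_spec {m n p : ℕ} (D : Matrix (Fin m) (Fin n) ℝ) (B : Matrix (Fin m) (Fin p) ℝ) :
    frobNorm (Bᵀ * D) ≤ specNorm D * frobNorm B := by
  have h1 : specNorm D = ‖Dᵀ‖ := by
    have := Matrix.l2_opNorm_conjTranspose D
    rw [Matrix.conjTranspose_eq_transpose_of_trivial] at this
    rw [this, Matrix.l2_opNorm_def]; rfl
  have h0 : 0 ≤ specNorm D := norm_nonneg _
  rw [← frob_transpose, Matrix.transpose_mul, Matrix.transpose_transpose]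
  apply le_of_sq_le_sq _ (mul_nonneg h0 (frob_nonneg _)) 
  rw [mul_pow, frob_sq, frob_sq, Finset.sum_comm, Finset.sum_comm (f := fun i j => B i j ^ 2), Finset.mul_sum]
  apply Finset.sum_le_sum
  intro j _
  have := Matrix.l2_opNorm_mulVec Dᵀ (WithLp.toLp 2 (fun i => B i j))
  rw [← h1] at this
  have h2 := pow_le_pow_left₀ (norm_nonneg _) this 2
  rw [mul_pow, EuclideanSpace.norm_sq_eq, EuclideanSpace.norm_sq_eq] at h2
  simpa [Matrix.mul_apply, Matrix.mulVec, dotProduct] using h2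
end

theorem polar_core {p : ℕ} (A : Matrix (Fin p) (Fin p) ℝ)
    (hA : ∀ U : Matrix (Fin p) (Fin p) ℝ, Uᵀ * U = 1 → ∀ i, ((A * U)ᵀ * (A * U)) i i ≤ 1) :
    ∃ Q : Matrix (Fin p) (Fin p) ℝ, Qᵀ * Q = 1 ∧ (Aᵀ * A).trace ≤ (Qᵀ * A).trace := by
  have hH : (Aᵀ * A).IsHermitian := by
    rw [Matrix.IsHermitian, Matrix.conjTranspose_eq_transpose_of_trivial]; simp
  obtain ⟨U, hU, l, hl⟩ : ∃ U : Matrix (Fin p) (Fin p) ℝ, Uᵀ * U = 1 ∧ ∃ l : Fin p → ℝ,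
      Uᵀ * (Aᵀ * A) * U = Matrix.diagonal l := by
    have hU0 : (hH.eigenvectorUnitary : Matrix (Fin p) (Fin p) ℝ)ᵀ * (hH.eigenvectorUnitary : Matrix (Fin p) (Fin p) ℝ) = 1 := by
      have := (Matrix.mem_unitaryGroup_iff').1 hH.eigenvectorUnitary.2
      rwa [Matrix.star_eq_conjTranspose, Matrix.conjTranspose_eq_transpose_of_trivial] at this
    refine ⟨hH.eigenvectorUnitary, hU0, hH.eigenvalues, ?_⟩
    have h := hH.spectral_theorem
    rw [Unitary.conjStarAlgAut_apply] at h
    rw [Matrix.star_eq_conjTranspose, Matrix.conjTranspose_eq_transpose_of_trivial] at h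
    generalize (hH.eigenvectorUnitary : Matrix (Fin p) (Fin p) ℝ) = U at *
    conv_lhs => rw [h]
    simp only [Matrix.mul_assoc, hU0, Matrix.mul_one]
    rw [← Matrix.mul_assoc, hU0, Matrix.one_mul]
    rfl
  have hUt : U * Uᵀ = 1 := mul_eq_one_comm.1 hU
  set B := A * U with hB
  have hBB : Bᵀ * B = Matrix.diagonal l := by
    rw [hB, Matrix.transpose_mul, ← hl]; simp only [Matrix.mul_assoc]
  have hdot : ∀ i j, ∑ x, B x i * B x j = if i = j then l i else 0 := by
    intro i j
    have := congrFun (congrFun hBB i) j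
    simpa [Matrix.mul_apply, Matrix.diagonal_apply] using this
  have hl0 : ∀ i, 0 ≤ l i := by
    intro i
    have := hdot i i
    rw [if_pos rfl] at this
    rw [← this]; exact Finset.sum_nonneg fun x _ => mul_self_nonneg _
  have hl1 : ∀ i, l i ≤ 1 := by
    intro i
    have := hA U hU i
    rw [← hB, hBB] at this; simpa using this
  let v : Fin p → EuclideanSpace ℝ (Fin p) := fun i => WithLp.toLp 2 (fun x => (Real.sqrt (l i))⁻¹ * B x i)
  have hv : Orthonormal ℝ (Set.domRestrict {i | 0 < l i} v) := by
    rw [orthonormal_iff_ite]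
    rintro ⟨i, hi⟩ ⟨j, hj⟩
    simp only [Set.mem_ofPred_eq] at hi hj
    have e : inner ℝ (v i) (v j) = (Real.sqrt (l i))⁻¹ * (Real.sqrt (l j))⁻¹ * ∑ x, B x i * B x j := by
      simp only [v, PiLp.inner_apply, Finset.mul_sum]
      apply Finset.sum_congr rfl
      intro x _
      simp; ring
    simp only [Subtype.mk.injEq]
    change inner ℝ (v i) (v j) = _
    rw [e, hdot]
    by_cases h : i = j
    · subst h
      simp only [if_true]
      have := Real.mul_self_sqrt hi.le
      have h3 : Real.sqrt (l i) ≠ 0 := (Real.sqrt_pos.2 hi).ne'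
      field_simp
      nlinarith
    · simp [h]
  obtain ⟨b, hb⟩ := hv.exists_orthonormalBasis_extension_of_card_eq (by simp)
  let C : Matrix (Fin p) (Fin p) ℝ := Matrix.of fun x i => b i x
  have hC : Cᵀ * C = 1 := by
    ext i j
    have := orthonormal_iff_ite.1 b.orthonormal i j
    rw [Matrix.one_apply, ← this, PiLp.inner_apply, Matrix.mul_apply]
    apply Finset.sum_congr rfl
    intro x _
    simp [C]; ring
  refine ⟨C * Uᵀ, ?_, ?_⟩
  · rw [Matrix.transpose_mul, Matrix.transpose_transpose, Matrix.mul_assoc, ← Matrix.mul_assoc Cᵀ,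
      hC, Matrix.one_mul, hUt]
  · have e1 : ((C * Uᵀ)ᵀ * A).trace = (Cᵀ * B).trace := by
      rw [Matrix.transpose_mul, Matrix.transpose_transpose, Matrix.mul_assoc, Matrix.trace_mul_comm,
        Matrix.mul_assoc]
    have e2 : (Aᵀ * A).trace = ∑ i, l i := by
      rw [← Matrix.trace_diagonal, ← hl, Matrix.trace_mul_comm (Uᵀ * (Aᵀ * A)) U, ← Matrix.mul_assoc, hUt, Matrix.one_mul]
    rw [e1, e2, Matrix.trace]
    apply Finset.sum_le_sum
    intro i _
    rw [Matrix.diag_apply, Matrix.mul_apply]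
    by_cases hi : 0 < l i
    · have hbi := hb i hi
      have : ∑ x, Cᵀ i x * B x i = (Real.sqrt (l i))⁻¹ * ∑ x, B x i * B x i := by
        rw [Finset.mul_sum]
        apply Finset.sum_congr rfl
        intro x _
        simp [C, hbi, v]; ring
      rw [this, hdot, if_pos rfl]
      have h1 := Real.mul_self_sqrt hi.le
      have h3 := Real.sqrt_pos.2 hi
      have h4 : Real.sqrt (l i) ≤ 1 := by rw [Real.sqrt_le_iff]; norm_num; exact hl1 i
      rw [inv_mul_eq_div, le_div_iff₀ h3]
      nlinarith
    · have h0 : l i = 0 := le_antisymm (not_lt.1 hi) (hl0 i)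
      have hz : ∀ x, B x i = 0 := by
        have := hdot i i
        rw [if_pos rfl, h0, Finset.sum_eq_zero_iff_of_nonneg (fun x _ => mul_self_nonneg _)] at this
        intro x
        exact mul_self_eq_zero.1 (this x (Finset.mem_univ x))
      simp [h0, hz]

theorem procrustes {m p : ℕ} (X Y : Matrix (Fin m) (Fin p) ℝ) (hX : Xᵀ * X = 1) (hY : Yᵀ * Y = 1) :
    ∃ Q : Matrix (Fin p) (Fin p) ℝ, Qᵀ * Q = 1 ∧
      frobNorm (Y - X * Q) ^ 2 ≤ 2 * ((p : ℝ) - frobNorm (Xᵀ * Y) ^ 2) := by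
  obtain ⟨Q, hQ, h⟩ := polar_core (Xᵀ * Y) (by
    intro U hU i
    have hZ : (Y * U)ᵀ * (Y * U) = 1 := by
      rw [Matrix.transpose_mul, Matrix.mul_assoc, ← Matrix.mul_assoc Yᵀ, hY, Matrix.one_mul, hU]
    rw [Matrix.mul_assoc]
    generalize Y * U = Z at hZ
    have key : (Z - X * (Xᵀ * Z))ᵀ * (Z - X * (Xᵀ * Z)) = 1 - (Xᵀ * Z)ᵀ * (Xᵀ * Z) := by
      have e : Xᵀ * (X * (Xᵀ * Z)) = Xᵀ * Z := by rw [← Matrix.mul_assoc, hX, Matrix.one_mul]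
      simp only [Matrix.transpose_sub, Matrix.transpose_mul, Matrix.transpose_transpose,
        Matrix.sub_mul, Matrix.mul_sub, Matrix.mul_assoc, hZ, e]
      abel
    have h2 : 0 ≤ ((Z - X * (Xᵀ * Z))ᵀ * (Z - X * (Xᵀ * Z))) i i := by
      rw [Matrix.mul_apply]
      exact Finset.sum_nonneg fun x _ => mul_self_nonneg _
    rw [key] at h2
    simp only [Matrix.sub_apply, Matrix.one_apply_eq] at h2
    linarith)
  refine ⟨Q, hQ, ?_⟩
  rw [frob_sq_tr, frob_sq_tr]
  have e : (Y - X * Q)ᵀ * (Y - X * Q) = 1 + 1 - (Qᵀ * (Xᵀ * Y))ᵀ - Qᵀ * (Xᵀ * Y) := by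
    have e1 : Xᵀ * (X * Q) = Q := by rw [← Matrix.mul_assoc, hX, Matrix.one_mul]
    simp only [Matrix.transpose_sub, Matrix.transpose_mul, Matrix.transpose_transpose,
        Matrix.sub_mul, Matrix.mul_sub, Matrix.mul_assoc, hY, e1, hQ]
    abel
  rw [e]
  simp only [Matrix.trace_sub, Matrix.trace_add, Matrix.trace_transpose, Matrix.trace_one, Fintype.card_fin]
  linarith

def hb (r : ℕ) {k : ℕ} (i : Fin k) : ℝ := if (i : ℕ) < r then 1 else 0

theorem orth_col {k : ℕ} (M : Matrix (Fin k) (Fin k) ℝ) (hM : Mᵀ * M = 1) (j : Fin k) :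
    ∑ i, M i j ^ 2 = 1 := by
  have := congrFun (congrFun hM j) j
  simpa [Matrix.mul_apply, sq] using this

theorem off_eq {k : ℕ} (r : ℕ) (M : Matrix (Fin k) (Fin k) ℝ) (hM : Mᵀ * M = 1) :
    ∑ i, ∑ j, hb r i * (1 - hb r j) * M i j ^ 2 = ∑ i, ∑ j, hb r j * (1 - hb r i) * M i j ^ 2 := by
  have hM' : Mᵀᵀ * Mᵀ = 1 := by rw [Matrix.transpose_transpose]; exact mul_eq_one_comm.1 hM
  have h1 : ∑ i, ∑ j, hb r i * M i j ^ 2 = ∑ i : Fin k, hb r i := by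
    apply Finset.sum_congr rfl; intro i _
    rw [← Finset.mul_sum]
    have := orth_col Mᵀ hM' i
    simp only [Matrix.transpose_apply] at this
    rw [this, mul_one]
  have h2 : ∑ i, ∑ j, hb r j * M i j ^ 2 = ∑ i : Fin k, hb r i := by
    rw [Finset.sum_comm]
    apply Finset.sum_congr rfl; intro i _
    rw [← Finset.mul_sum, orth_col M hM i, mul_one]
  have h3 : ∀ i j, hb r i * (1 - hb r j) * M i j ^ 2 = hb r i * M i j ^ 2 - hb r i * hb r j * M i j ^ 2 := by
    intros; ring
  have h4 : ∀ i j, hb r j * (1 - hb r i) * M i j ^ 2 = hb r j * M i j ^ 2 - hb r i * hb r j * M i j ^ 2 := by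
    intros; ring
  simp only [h3, h4, Finset.sum_sub_distrib, h1, h2]

theorem big11 (a c x y m n : ℝ) (h : (a + c) ^ 2 ≤ (x + y) ^ 2) :
    (a + c) ^ 2 / 2 * (m - n) ^ 2 ≤ (x * m - n * y) ^ 2 + (x * n - m * y) ^ 2 := by
  have u2 := mul_le_mul_of_nonneg_right h (sq_nonneg (m - n))
  have u3 := sq_nonneg ((x - y) * (m + n))
  linarith

set_option maxHeartbeats 1000000 in
theorem coord {k r : ℕ} (M N : Matrix (Fin k) (Fin k) ℝ) (hM : Mᵀ * M = 1) (hN : Nᵀ * N = 1)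
    (s t : Fin k → ℝ) (a c e : ℝ) (ha : 0 < a) (hc : 0 < c) (he : 0 ≤ e)
    (hs : ∀ i : Fin k, (i : ℕ) < r → a ≤ s i) (ht : ∀ i : Fin k, (i : ℕ) < r → c ≤ t i)
    (hs0 : ∀ i : Fin k, r ≤ (i : ℕ) → s i = 0) (ht0 : ∀ i : Fin k, r ≤ (i : ℕ) → t i = 0)
    (hF : frobNorm (Matrix.diagonal s * M - N * Matrix.diagonal t) ≤ e) :
    (a + c) ^ 2 * (∑ i, ∑ j, (hb r i * M i j - N i j * hb r j) ^ 2) ≤ 4 * e ^ 2 ∧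
    (max a c) ^ 2 * (∑ i, ∑ j, hb r i * (1 - hb r j) * M i j ^ 2) ≤ e ^ 2 ∧
    (max a c) ^ 2 * (∑ i, ∑ j, hb r i * (1 - hb r j) * N i j ^ 2) ≤ e ^ 2 := by
  have hMt : M * Mᵀ = 1 := mul_eq_one_comm.1 hM
  have hF' : frobNorm (Matrix.diagonal s * N - M * Matrix.diagonal t) =
      frobNorm (Matrix.diagonal s * M - N * Matrix.diagonal t) := by
    have h1 : Matrix.diagonal s * N - M * Matrix.diagonal t =
        (Nᵀ * ((Matrix.diagonal s * M - N * Matrix.diagonal t) * Mᵀ))ᵀ := by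
      simp only [Matrix.sub_mul, Matrix.mul_sub, Matrix.mul_assoc, hMt, Matrix.mul_one]
      rw [← Matrix.mul_assoc Nᵀ N, hN, Matrix.one_mul]
      simp
    rw [h1, frob_transpose, frob_isoL Nᵀ (by rw [Matrix.transpose_transpose]; exact mul_eq_one_comm.1 hN),
      frob_isoR M hM]
  have hFs := pow_le_pow_left₀ (frob_nonneg _) hF 2
  have hFs' := hFs
  rw [← hF'] at hFs'
  rw [frob_sq] at hFs hFs'
  simp only [Matrix.sub_apply, Matrix.diagonal_mul, Matrix.mul_diagonal] at hFs hFs'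
  have oM := off_eq r M hM
  have oN := off_eq r N hN
  set m := ∑ i, ∑ j, hb r i * (1 - hb r j) * M i j ^ 2 with hm
  set q := ∑ i, ∑ j, hb r i * (1 - hb r j) * N i j ^ 2 with hq
  have cs : ∀ i : Fin k, (hb r i = 1 ∧ a ≤ s i ∧ c ≤ t i) ∨ (hb r i = 0 ∧ s i = 0 ∧ t i = 0) := by
    intro i
    by_cases h : (i : ℕ) < r
    · left; exact ⟨by simp [hb, h], hs i h, ht i h⟩
    · right; exact ⟨by simp [hb, h], hs0 i (not_lt.1 h), ht0 i (not_lt.1 h)⟩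
  have m1 : a ^ 2 * m ≤ e ^ 2 := by
    refine le_trans ?_ hFs
    rw [hm, Finset.mul_sum]; refine Finset.sum_le_sum fun i _ => ?_
    rw [Finset.mul_sum]; refine Finset.sum_le_sum fun j _ => ?_
    rcases cs i with ⟨h1, h2, h3⟩ | ⟨h1, h2, h3⟩ <;> rcases cs j with ⟨g1, g2, g3⟩ | ⟨g1, g2, g3⟩ <;>
      rw [h1, g1] <;> (try (ring_nf; positivity)) <;> (try (norm_num; positivity))
    rw [g3]; norm_num; rw [mul_pow]; gcongr
  have q1 : a ^ 2 * q ≤ e ^ 2 := by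
    refine le_trans ?_ hFs'
    rw [hq, Finset.mul_sum]; refine Finset.sum_le_sum fun i _ => ?_
    rw [Finset.mul_sum]; refine Finset.sum_le_sum fun j _ => ?_
    rcases cs i with ⟨h1, h2, h3⟩ | ⟨h1, h2, h3⟩ <;> rcases cs j with ⟨g1, g2, g3⟩ | ⟨g1, g2, g3⟩ <;>
      rw [h1, g1] <;> (try (norm_num; positivity))
    rw [g3]; norm_num; rw [mul_pow]; gcongr
  have m2 : c ^ 2 * m ≤ e ^ 2 := by
    refine le_trans ?_ hFs'
    rw [oM, Finset.mul_sum]; refine Finset.sum_le_sum fun i _ => ?_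
    rw [Finset.mul_sum]; refine Finset.sum_le_sum fun j _ => ?_
    rcases cs i with ⟨h1, h2, h3⟩ | ⟨h1, h2, h3⟩ <;> rcases cs j with ⟨g1, g2, g3⟩ | ⟨g1, g2, g3⟩ <;>
      rw [h1, g1] <;> (try (norm_num; positivity))
    rw [h2]; norm_num; rw [mul_pow, mul_comm]; gcongr
  have q2 : c ^ 2 * q ≤ e ^ 2 := by
    refine le_trans ?_ hFs
    rw [oN, Finset.mul_sum]; refine Finset.sum_le_sum fun i _ => ?_
    rw [Finset.mul_sum]; refine Finset.sum_le_sum fun j _ => ?_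
    rcases cs i with ⟨h1, h2, h3⟩ | ⟨h1, h2, h3⟩ <;> rcases cs j with ⟨g1, g2, g3⟩ | ⟨g1, g2, g3⟩ <;>
      rw [h1, g1] <;> (try (norm_num; positivity))
    rw [h2]; norm_num; rw [mul_pow, mul_comm]; gcongr
  have mx : (max a c) ^ 2 = a ^ 2 ∨ (max a c) ^ 2 = c ^ 2 := by
    rcases max_choice a c with h | h <;> simp [h]
  refine ⟨?_, ?_, ?_⟩
  · have split : ∑ i, ∑ j, (hb r i * M i j - N i j * hb r j) ^ 2 =
        (∑ i, ∑ j, hb r i * hb r j * (M i j - N i j) ^ 2) + m + q := by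
      rw [oN, hm, ← Finset.sum_add_distrib, ← Finset.sum_add_distrib]
      refine Finset.sum_congr rfl fun i _ => ?_
      rw [← Finset.sum_add_distrib, ← Finset.sum_add_distrib]
      refine Finset.sum_congr rfl fun j _ => ?_
      rcases cs i with ⟨h1, h2, h3⟩ | ⟨h1, h2, h3⟩ <;> rcases cs j with ⟨g1, g2, g3⟩ | ⟨g1, g2, g3⟩ <;>
        rw [h1, g1] <;> ring
    have big : (a + c) ^ 2 / 2 * (∑ i, ∑ j, hb r i * hb r j * (M i j - N i j) ^ 2) +
        a ^ 2 * m + a ^ 2 * q + c ^ 2 * m + c ^ 2 * q ≤ e ^ 2 + e ^ 2 := by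
      refine le_trans ?_ (add_le_add hFs hFs')
      have := oM
      have : c ^ 2 * m + c ^ 2 * q =
        c ^ 2 * (∑ i, ∑ j, hb r j * (1 - hb r i) * M i j ^ 2) + c ^ 2 * (∑ i, ∑ j, hb r j * (1 - hb r i) * N i j ^ 2) := by
        rw [← oM, ← oN]
      rw [add_assoc, this, hm, hq]
      simp only [Finset.mul_sum, ← Finset.sum_add_distrib]
      refine Finset.sum_le_sum fun i _ => Finset.sum_le_sum fun j _ => ?_
      rcases cs i with ⟨h1, h2, h3⟩ | ⟨h1, h2, h3⟩ <;> rcases cs j with ⟨g1, g2, g3⟩ | ⟨g1, g2, g3⟩ <;>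
        rw [h1, g1]
      · have u1 : (a + c) ^ 2 ≤ (s i + t j) ^ 2 := by gcongr
        have u2 := big11 _ _ _ _ (M i j) (N i j) u1
        linarith
      · rw [g3]
        have u1 : a ^ 2 ≤ s i ^ 2 := by gcongr
        have u2 := mul_le_mul_of_nonneg_right u1 (sq_nonneg (M i j))
        have u3 := mul_le_mul_of_nonneg_right u1 (sq_nonneg (N i j))
        linarith
      · rw [h2]
        have u1 : c ^ 2 ≤ t j ^ 2 := by gcongr
        have u2 := mul_le_mul_of_nonneg_right u1 (sq_nonneg (M i j))
        have u3 := mul_le_mul_of_nonneg_right u1 (sq_nonneg (N i j))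
        linarith
      · rw [h2, g3]; norm_num
    have nn : ∀ i : Fin k, 0 ≤ hb r i ∧ 0 ≤ 1 - hb r i := by
      intro i; rcases cs i with ⟨h1, _⟩ | ⟨h1, _⟩ <;> rw [h1] <;> norm_num
    have m0 : 0 ≤ m := Finset.sum_nonneg fun i _ => Finset.sum_nonneg fun j _ =>
      mul_nonneg (mul_nonneg (nn i).1 (nn j).2) (sq_nonneg _)
    have q0 : 0 ≤ q := Finset.sum_nonneg fun i _ => Finset.sum_nonneg fun j _ =>
      mul_nonneg (mul_nonneg (nn i).1 (nn j).2) (sq_nonneg _)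
    rw [split]
    linarith [mul_nonneg (sq_nonneg (a - c)) m0, mul_nonneg (sq_nonneg (a - c)) q0]
  · rcases mx with h | h <;> rw [h] <;> assumption
  · rcases mx with h | h <;> rw [h] <;> assumption

theorem sum_split {k r : ℕ} (h : r ≤ k) (g : Fin k → ℝ) :
    (∑ j : Fin r, g (Fin.castLE h j) = ∑ i, hb r i * g i) ∧
    (∑ j : Fin (k - r), g (Fin.cast (Nat.add_sub_cancel' h) (Fin.natAdd r j)) =
      ∑ i, (1 - hb r i) * g i) := by
  have e : ∀ f : Fin k → ℝ, ∑ i, f i = ∑ i, f (Fin.cast (Nat.add_sub_cancel' h) i) := fun f =>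
    ((finCongr (Nat.add_sub_cancel' h)).sum_comp f).symm
  constructor
  · rw [e, Fin.sum_univ_add]
    simp [hb]
    rfl
  · rw [e, Fin.sum_univ_add]
    simp [hb]

theorem head_mul {k r : ℕ} (h : r ≤ k) (V : Matrix (Fin k) (Fin k) ℝ) :
    headCols r h V * (headCols r h V)ᵀ = V * Matrix.diagonal (hb r) * Vᵀ := by
  ext i j
  rw [Matrix.mul_apply, Matrix.mul_apply]
  simp only [headCols, Matrix.submatrix_apply, Matrix.transpose_apply, id, Matrix.mul_diagonal]
  rw [(sum_split h (fun x => V i x * V j x)).1]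
  exact Finset.sum_congr rfl fun x _ => by ring

theorem tail_mul {k r : ℕ} (h : r ≤ k) (V : Matrix (Fin k) (Fin k) ℝ) (hV : Vᵀ * V = 1) :
    headCols r h V * (headCols r h V)ᵀ + tailCols r h V * (tailCols r h V)ᵀ = 1 := by
  have hV' : V * Vᵀ = 1 := mul_eq_one_comm.1 hV
  rw [head_mul, ← hV']
  ext i j
  rw [Matrix.add_apply, Matrix.mul_apply, Matrix.mul_apply, Matrix.mul_apply]
  simp only [tailCols, Matrix.submatrix_apply, Matrix.transpose_apply, id, Matrix.mul_diagonal]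
  rw [(sum_split h (fun x => V i x * V j x)).2, ← Finset.sum_add_distrib]
  exact Finset.sum_congr rfl fun x _ => by ring

theorem tail_orth {k r : ℕ} (h : r ≤ k) (V : Matrix (Fin k) (Fin k) ℝ) (hV : Vᵀ * V = 1) :
    (tailCols r h V)ᵀ * tailCols r h V = 1 := by
  ext i j
  have := congrFun (congrFun hV (Fin.cast (Nat.add_sub_cancel' h) (Fin.natAdd r i)))
    (Fin.cast (Nat.add_sub_cancel' h) (Fin.natAdd r j))
  rw [Matrix.mul_apply] at this ⊢
  simp only [tailCols, Matrix.submatrix_apply, Matrix.transpose_apply, id] at this ⊢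
  rw [this, Matrix.one_apply, Matrix.one_apply]
  simp [Fin.ext_iff]

theorem tail_angle {k r : ℕ} (h : r ≤ k) (V U : Matrix (Fin k) (Fin k) ℝ) (hV : Vᵀ * V = 1)
    (hU : Uᵀ * U = 1) :
    ((k - r : ℕ) : ℝ) - frobNorm ((tailCols r h V)ᵀ * tailCols r h U) ^ 2 =
      ∑ i, ∑ j, hb r i * (1 - hb r j) * (Vᵀ * U) i j ^ 2 := by
  have hN : (Vᵀ * U)ᵀ * (Vᵀ * U) = 1 := by
    rw [Matrix.transpose_mul, Matrix.transpose_transpose, Matrix.mul_assoc, ← Matrix.mul_assoc V,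
      mul_eq_one_comm.1 hV, Matrix.one_mul, hU]
  have e : ∀ i j, ((tailCols r h V)ᵀ * tailCols r h U) i j =
      (Vᵀ * U) (Fin.cast (Nat.add_sub_cancel' h) (Fin.natAdd r i))
        (Fin.cast (Nat.add_sub_cancel' h) (Fin.natAdd r j)) := by
    intro i j
    rw [Matrix.mul_apply, Matrix.mul_apply]; rfl
  rw [frob_sq]
  simp only [e]
  generalize Vᵀ * U = N at hN
  have h1 : ((k - r : ℕ) : ℝ) = ∑ j : Fin k, (1 - hb r j) * 1 := by
    rw [← (sum_split h (fun _ => (1:ℝ))).2]; simp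
  have h2 : ∀ i : Fin k, ∑ j : Fin (k - r), N i (Fin.cast (Nat.add_sub_cancel' h) (Fin.natAdd r j)) ^ 2
      = ∑ j, (1 - hb r j) * N i j ^ 2 := fun i => (sum_split h (fun j => N i j ^ 2)).2
  simp only [h2]
  rw [(sum_split h (fun i => ∑ j, (1 - hb r j) * N i j ^ 2)).2, h1]
  have h3 : ∑ j : Fin k, (1 - hb r j) * 1 = ∑ i, ∑ j, (1 - hb r j) * N i j ^ 2 := by
    rw [Finset.sum_comm]
    refine Finset.sum_congr rfl fun j _ => ?_
    rw [← Finset.mul_sum, orth_col N hN]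
  rw [h3, ← Finset.sum_sub_distrib]
  refine Finset.sum_congr rfl fun i _ => ?_
  rw [Finset.mul_sum, ← Finset.sum_sub_distrib]
  exact Finset.sum_congr rfl fun j _ => by ring

theorem tail_mul_left {k r : ℕ} (h : r ≤ k) (Q V : Matrix (Fin k) (Fin k) ℝ) :
    Q * tailCols r h V = tailCols r h (Q * V) := by
  ext i j
  simp [tailCols, Matrix.mul_apply]

/-- rank-deficient case, Frobenius norm. With XᵀD = VΣVᵀ, X̃ᵀD = ṼΣ̃Ṽᵀ
spectral decompositions of rank r < k, there exists an orthogonal W ∈ 𝕆^{(k−r)×(k−r)}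
such that ‖X̃ − (XV₁V₁ᵀ + XV₂WV₂ᵀ)‖_F ≤
(√2 + 2√2‖D‖₂/(σ_r + σ̃_r) + 4‖D‖₂/max{σ_r, σ̃_r})·√(k − ‖XᵀX̃‖_F²). -/
theorem rank_deficient_frob_bound {n k r : ℕ} (hr : 1 ≤ r) (hrk : r < k) (hkn : k ≤ n)
    (D X Xt : Matrix (Fin n) (Fin k) ℝ)
    (hX : Xᵀ * X = 1) (hXt : Xtᵀ * Xt = 1)
    (hpsd : (Xᵀ * D).PosSemidef) (hpsdt : (Xtᵀ * D).PosSemidef)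
    (hrank : (Xᵀ * D).rank = r) (hrankt : (Xtᵀ * D).rank = r)
    (V Vt : Matrix (Fin k) (Fin k) ℝ) (hV : Vᵀ * V = 1) (hVt : Vtᵀ * Vt = 1)
    (s st : Fin k → ℝ)
    (hord : ∀ i j : Fin k, i ≤ j → s j ≤ s i)
    (hordt : ∀ i j : Fin k, i ≤ j → st j ≤ st i)
    (hpos : ∀ i : Fin k, (i : ℕ) < r → 0 < s i)
    (hpost : ∀ i : Fin k, (i : ℕ) < r → 0 < st i)
    (hzero : ∀ i : Fin k, r ≤ (i : ℕ) → s i = 0)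
    (hzerot : ∀ i : Fin k, r ≤ (i : ℕ) → st i = 0)
    (hdec : Xᵀ * D = V * Matrix.diagonal s * Vᵀ)
    (hdect : Xtᵀ * D = Vt * Matrix.diagonal st * Vtᵀ) :
    ∃ W : Matrix (Fin (k - r)) (Fin (k - r)) ℝ, Wᵀ * W = 1 ∧
      frobNorm (Xt - (X * headCols r hrk.le V * (headCols r hrk.le V)ᵀ +
            X * tailCols r hrk.le V * W * (tailCols r hrk.le V)ᵀ))
        ≤ (Real.sqrt 2 +
            2 * Real.sqrt 2 * specNorm D /
              (s ⟨r - 1, by omega⟩ + st ⟨r - 1, by omega⟩) +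
            4 * specNorm D / max (s ⟨r - 1, by omega⟩) (st ⟨r - 1, by omega⟩)) *
          Real.sqrt ((k : ℝ) - frobNorm (Xᵀ * Xt) ^ 2) := by
  have hQQ : ∀ {p : ℕ} {A : Matrix (Fin p) (Fin p) ℝ}, Aᵀ * A = 1 → A * Aᵀ = 1 :=
    fun h => mul_eq_one_comm.1 h
  obtain ⟨Q, hQ, hQb⟩ := procrustes X Xt hX hXt
  set d : ℝ := (k : ℝ) - frobNorm (Xᵀ * Xt) ^ 2 with hd
  have hd0 : 0 ≤ d := by nlinarith [sq_nonneg (frobNorm (Xt - X * Q))]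
  have hQV : (Q * Vt)ᵀ * (Q * Vt) = 1 := by
    rw [Matrix.transpose_mul, Matrix.mul_assoc, ← Matrix.mul_assoc Qᵀ, hQ, Matrix.one_mul, hVt]
  have hMo : (Vᵀ * Vt)ᵀ * (Vᵀ * Vt) = 1 := by
    rw [Matrix.transpose_mul, Matrix.transpose_transpose, Matrix.mul_assoc, ← Matrix.mul_assoc V,
      hQQ hV, Matrix.one_mul, hVt]
  have hNo : (Vᵀ * (Q * Vt))ᵀ * (Vᵀ * (Q * Vt)) = 1 := by
    rw [Matrix.transpose_mul, Matrix.transpose_transpose, Matrix.mul_assoc, ← Matrix.mul_assoc V,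
      hQQ hV, Matrix.one_mul, hQV]
  have hVi : Vᵀᵀ * Vᵀ = 1 := by rw [Matrix.transpose_transpose]; exact hQQ hV
  have hVti : Vtᵀᵀ * Vtᵀ = 1 := by rw [Matrix.transpose_transpose]; exact hQQ hVt
  have hQi : Qᵀᵀ * Qᵀ = 1 := by rw [Matrix.transpose_transpose]; exact hQQ hQ
  have n1 : frobNorm (Xt - X * Q) ≤ Real.sqrt 2 * Real.sqrt d := by
    rw [← Real.sqrt_mul (by norm_num)]
    exact Real.le_sqrt_of_sq_le hQb
  have hD0 : 0 ≤ specNorm D := norm_nonneg _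
  set e : ℝ := specNorm D * (Real.sqrt 2 * Real.sqrt d) with he
  have he0 : 0 ≤ e := by positivity
  set a := s ⟨r - 1, by omega⟩ with hadef
  set c := st ⟨r - 1, by omega⟩ with hcdef
  have ha : 0 < a := hpos _ (by simp; omega)
  have hc : 0 < c := hpost _ (by simp; omega)
  have hF : frobNorm (Matrix.diagonal s * (Vᵀ * Vt) - Vᵀ * (Q * Vt) * Matrix.diagonal st) ≤ e := by
    have e1 : Matrix.diagonal s * (Vᵀ * Vt) - Vᵀ * (Q * Vt) * Matrix.diagonal st =
        Vᵀ * ((Q * -((Xt - X * Q)ᵀ * D)) * Vtᵀᵀ) := by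
      have e2 : Q * -((Xt - X * Q)ᵀ * D) = Xᵀ * D - Q * (Xtᵀ * D) := by
        rw [Matrix.transpose_sub, Matrix.transpose_mul, Matrix.sub_mul, Matrix.mul_neg,
          Matrix.mul_sub, ← Matrix.mul_assoc Q (Qᵀ * Xᵀ), ← Matrix.mul_assoc Q Qᵀ, hQQ hQ,
          Matrix.one_mul]
        abel
      rw [e2, hdec, hdect]
      simp only [Matrix.sub_mul, Matrix.mul_sub, Matrix.mul_assoc, Matrix.transpose_transpose, hVt,
        Matrix.mul_one]
      rw [← Matrix.mul_assoc Vᵀ V, hV, Matrix.one_mul]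
    rw [e1, frob_isoL _ hVi, frob_isoR _ hVti, frob_isoL _ hQ, frob_neg]
    exact (frob_spec D _).trans (mul_le_mul_of_nonneg_left n1 hD0)
  obtain ⟨c1, c2, c3⟩ := coord (r := r) _ _ hMo hNo s st a c e ha hc he0
    (fun i hi => hord _ _ (Fin.le_def.2 (by simp; omega)))
    (fun i hi => hordt _ _ (Fin.le_def.2 (by simp; omega))) hzero hzerot hF
  have hV2 := tail_orth hrk.le V hV
  have hVt2 := tail_orth hrk.le Vt hVt
  have hQVt2 := tail_orth hrk.le (Q * Vt) hQV
  obtain ⟨W1, hW1, b1⟩ := procrustes _ _ hV2 hQVt2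
  obtain ⟨W2, hW2, b2⟩ := procrustes _ _ hV2 hVt2
  rw [tail_angle hrk.le V _ hV hQV] at b1
  rw [tail_angle hrk.le V _ hV hVt] at b2
  have hmx : 0 < max a c := lt_max_of_lt_left ha
  have fin1 : ∀ x y : ℝ, x ^ 2 ≤ 2 * y → max a c ^ 2 * y ≤ e ^ 2 →
      x ≤ Real.sqrt 2 * e / max a c := by
    intro x y h1 h2
    rw [le_div_iff₀ hmx]
    apply le_of_sq_le_sq _ (by positivity)
    rw [mul_pow, mul_pow, Real.sq_sqrt (by norm_num)]
    nlinarith [mul_le_mul_of_nonneg_right h1 (sq_nonneg (max a c))]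
  have b1' := fin1 _ _ b1 c3
  have b2' := fin1 _ _ b2 c2
  have n2 : frobNorm (Q * (headCols r hrk.le Vt * (headCols r hrk.le Vt)ᵀ) -
      headCols r hrk.le V * (headCols r hrk.le V)ᵀ) ≤ 2 * e / (a + c) := by
    rw [head_mul, head_mul, ← frob_isoL Vᵀ hVi, ← frob_isoR Vtᵀ hVti, ← frob_neg]
    have e1 : -(Vᵀ * (Q * (Vt * Matrix.diagonal (hb r) * Vtᵀ) - V * Matrix.diagonal (hb r) * Vᵀ) * Vtᵀᵀ)
        = Matrix.diagonal (hb r) * (Vᵀ * Vt) - Vᵀ * (Q * Vt) * Matrix.diagonal (hb r) := by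
      simp only [Matrix.sub_mul, Matrix.mul_sub, Matrix.mul_assoc, Matrix.transpose_transpose, hVt,
        Matrix.mul_one]
      rw [← Matrix.mul_assoc Vᵀ V, hV, Matrix.one_mul, neg_sub]
    rw [e1, le_div_iff₀ (by positivity)]
    apply le_of_sq_le_sq _ (by positivity)
    rw [mul_pow, frob_sq]
    simp only [Matrix.sub_apply, Matrix.diagonal_mul, Matrix.mul_diagonal]
    linarith
  have hW2t : W2 * W2ᵀ = 1 := hQQ hW2
  refine ⟨W1 * W2ᵀ, ?_, ?_⟩
  · rw [Matrix.transpose_mul, Matrix.transpose_transpose, Matrix.mul_assoc, ← Matrix.mul_assoc W1ᵀ,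
      hW1, Matrix.one_mul, hW2t]
  · have hsum := tail_mul hrk.le Vt hVt
    rw [← tail_mul_left] at b1'
    generalize headCols r hrk.le V = V1 at *
    generalize tailCols r hrk.le V = V2 at *
    generalize headCols r hrk.le Vt = U1 at *
    generalize tailCols r hrk.le Vt = U2 at *
    have dec : Xt - (X * V1 * V1ᵀ + X * V2 * (W1 * W2ᵀ) * V2ᵀ) =
        (Xt - X * Q) + X * (Q * (U1 * U1ᵀ) - V1 * V1ᵀ) + X * ((Q * U2 - V2 * W1) * U2ᵀ) +
          X * (V2 * (W1 * (U2 - V2 * W2)ᵀ)) := by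
      have e0 : X * Q = X * (Q * (U1 * U1ᵀ)) + X * (Q * (U2 * U2ᵀ)) := by
        rw [← Matrix.mul_add, ← Matrix.mul_add, hsum, Matrix.mul_one]
      rw [e0]
      simp only [Matrix.sub_mul, Matrix.mul_sub, Matrix.mul_assoc, Matrix.transpose_sub,
        Matrix.transpose_mul]
      abel
    rw [dec]
    refine (frob_add _ _).trans ((add_le_add_left ((frob_add _ _).trans
      (add_le_add_left (frob_add _ _) _)) _).trans ?_)
    rw [frob_isoL X hX, frob_isoL X hX, frob_isoL X hX, frob_isoL V2 hV2, frob_isoL W1 hW1,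
      frob_isoR U2 hVt2, frob_transpose]
    have s2 : Real.sqrt 2 * Real.sqrt 2 = 2 := Real.mul_self_sqrt (by norm_num)
    have f2 : 2 * e / (a + c) = 2 * Real.sqrt 2 * specNorm D / (a + c) * Real.sqrt d := by
      rw [he]; ring
    have f3 : Real.sqrt 2 * e / max a c + Real.sqrt 2 * e / max a c
        = 4 * specNorm D / max a c * Real.sqrt d := by
      have : Real.sqrt 2 * e = 2 * specNorm D * Real.sqrt d := by
        rw [he]; linear_combination (specNorm D * Real.sqrt d) * s2
      rw [this]; ring
    rw [add_mul, add_mul, ← f2, ← f3]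
    linarith
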